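/- Let N ≥ 1 be an integer, ω > 0, and 1 < p < p_max, and let u be a ground-state profile of (QLS). If ζ : ℝ^N → ℝ is smooth, with ∫_{ℝ^N}(ζ² + |∇ζ|²) dx < ∞, and satisfies L₋ζ = 0 pointwise on ℝ^N, then there exists a real number c such that ζ = c·u; that is, the kernel of L₋ is spanned by u. -/

import Mathlib

open MeasureTheory Real Filter Topology

noncomputable section

/-- Partial derivative along the `i`-th coordinate direction. -/
def pd {N : ℕ} {F : Type*} [NormedAddCommGroup F] [NormedSpace ℝ F]
    (i : Fin N) (f : EuclideanSpace ℝ (Fin N) → F) (x : EuclideanSpace ℝ (Fin N)) : F :=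
  fderiv ℝ f x (EuclideanSpace.single i 1)

/-- Euclidean Laplacian. -/
def lap {N : ℕ} {F : Type*} [NormedAddCommGroup F] [NormedSpace ℝ F]
    (f : EuclideanSpace ℝ (Fin N) → F) (x : EuclideanSpace ℝ (Fin N)) : F :=
  ∑ i : Fin N, pd i (pd i f) x

/-- Squared norm of the gradient of a real-valued function: `|∇f|²`. -/
def gradsq {N : ℕ} (f : EuclideanSpace ℝ (Fin N) → ℝ) (x : EuclideanSpace ℝ (Fin N)) : ℝ :=
  ∑ i : Fin N, (pd i f x) ^ 2

/-- A ground-state profile of the quasilinear Schrödinger equation (QLS)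
`-Δu - uΔ(u²) + ωu - u^p = 0` on `ℝ^N`: smooth, positive, radially symmetric with a
strictly decreasing positive profile, solves (QLS) pointwise, and decays
exponentially together with all its derivatives. -/
structure IsGroundState (N : ℕ) (ω p : ℝ) (u : EuclideanSpace ℝ (Fin N) → ℝ) : Prop where
  smooth : ContDiff ℝ (⊤ : ℕ∞) u
  pos : ∀ x, 0 < u x
  radial : ∃ U : ℝ → ℝ, StrictAntiOn U (Set.Ici 0) ∧ (∀ r, 0 ≤ r → 0 < U r) ∧
      ∀ x, u x = U ‖x‖
  solves : ∀ x, -lap u x - u x * lap (fun y => (u y) ^ 2) x + ω * u x - (u x) ^ p = 0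
  decay : ∀ k : ℕ, ∃ C > 0, ∃ δ > 0, ∀ x,
      ‖iteratedFDeriv ℝ k u x‖ ≤ C * Real.exp (-δ * ‖x‖)

/-- The linearized operator `L₊` around `u` (real-valued functions). -/
def Lplus {N : ℕ} (ω p : ℝ) (u η : EuclideanSpace ℝ (Fin N) → ℝ)
    (x : EuclideanSpace ℝ (Fin N)) : ℝ :=
  -lap η x - 2 * u x * lap (fun y => u y * η y) x + ω * η x
    - (lap (fun y => (u y) ^ 2) x + p * u x ^ (p - 1)) * η x

/-- The linearized operator `L₋` around `u`. -/
def Lminus {N : ℕ} (ω p : ℝ) (u ζ : EuclideanSpace ℝ (Fin N) → ℝ)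
    (x : EuclideanSpace ℝ (Fin N)) : ℝ :=
  -lap ζ x + ω * ζ x - (lap (fun y => (u y) ^ 2) x + u x ^ (p - 1)) * ζ x


abbrev EE (N : ℕ) := EuclideanSpace ℝ (Fin N)

lemma pd_mul {N : ℕ} {f g : EE N → ℝ} {x : EE N} (i : Fin N)
    (hf : DifferentiableAt ℝ f x) (hg : DifferentiableAt ℝ g x) :
    pd i (fun y => f y * g y) x = f x * pd i g x + g x * pd i f x := by
  unfold pd
  rw [fderiv_fun_mul hf hg]
  simp

lemma pd_sub {N : ℕ} {f g : EE N → ℝ} {x : EE N} (i : Fin N)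
    (hf : DifferentiableAt ℝ f x) (hg : DifferentiableAt ℝ g x) :
    pd i (fun y => f y - g y) x = pd i f x - pd i g x := by
  unfold pd
  rw [fderiv_fun_sub hf hg]
  simp

lemma pd_smooth {N : ℕ} {f : EE N → ℝ} (i : Fin N) (hf : ContDiff ℝ (⊤ : ℕ∞) f) :
    ContDiff ℝ (⊤ : ℕ∞) (pd i f) := by
  unfold pd
  exact (hf.fderiv_right (m := (⊤ : ℕ∞)) (by simp)).clm_apply contDiff_const

lemma smooth_diff {N : ℕ} {f : EE N → ℝ} (hf : ContDiff ℝ (⊤ : ℕ∞) f) : Differentiable ℝ f :=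
  hf.differentiable (by simp)

lemma pd_compact {N : ℕ} {f : EE N → ℝ} (i : Fin N) (hf : HasCompactSupport f) :
    HasCompactSupport (pd i f) := by
  unfold pd
  exact hf.fderiv_apply ℝ _

lemma integral_pd {N : ℕ} {f : EE N → ℝ} (i : Fin N) (hf : ContDiff ℝ (⊤ : ℕ∞) f)
    (hc : HasCompactSupport f) : ∫ x, pd i f x = 0 := by
  have h1 : Integrable (pd i f) :=
    (pd_smooth i hf).continuous.integrable_of_hasCompactSupport (pd_compact i hc)
  have h2 : Integrable f := hf.continuous.integrable_of_hasCompactSupport hc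
  have := integral_mul_fderiv_eq_neg_fderiv_mul_of_integrable (𝕜 := ℝ) (μ := (volume : Measure (EE N)))
    (f := fun _ => (1 : ℝ)) (g := f) (v := EuclideanSpace.single i 1)
    (by simp) (by simp only [one_mul]; exact h1) (by simpa using h2)
    (fun x _ => differentiableAt_const _) (fun x _ => smooth_diff hf x)
  simpa [pd] using this

/-- Caccioppoli inequality. -/
lemma cacc {N : ℕ} {u ζ χ : EE N → ℝ} (hu : ContDiff ℝ (⊤ : ℕ∞) u) (hpos : ∀ x, 0 < u x)
    (hζ : ContDiff ℝ (⊤ : ℕ∞) ζ) (hχ : ContDiff ℝ (⊤ : ℕ∞) χ) (hc : HasCompactSupport χ)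
    (hW : ∀ x, u x * lap ζ x - ζ x * lap u x = 0) :
    ∫ x, χ x ^ 2 * ∑ i, ((u x * pd i ζ x - ζ x * pd i u x) / u x) ^ 2 ≤
      ∫ x, 4 * (ζ x ^ 2 * gradsq χ x) := by
  set G : Fin N → EE N → ℝ := fun i x => u x * pd i ζ x - ζ x * pd i u x with hG
  have hGs : ∀ i, ContDiff ℝ (⊤ : ℕ∞) (G i) := fun i =>
    (hu.mul (pd_smooth i hζ)).sub (hζ.mul (pd_smooth i hu))
  have hdG : ∀ x, ∑ i, pd i (G i) x = 0 := by
    intro x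
    rw [← hW x]
    simp only [lap, Finset.mul_sum, ← Finset.sum_sub_distrib]
    refine Finset.sum_congr rfl fun i _ => ?_
    have a1 := smooth_diff hu x
    have a2 := smooth_diff hζ x
    have a3 := smooth_diff (pd_smooth i hu) x
    have a4 := smooth_diff (pd_smooth i hζ) x
    simp only [hG]
    rw [pd_sub i (a1.fun_mul a4) (a2.fun_mul a3), pd_mul i a1 a4, pd_mul i a2 a3]
    ring
  set w : EE N → ℝ := fun x => ζ x / u x with hw
  have hws : ContDiff ℝ (⊤ : ℕ∞) w := hζ.div hu (fun x => (hpos x).ne')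
  have hdw : ∀ i x, pd i w x = G i x / u x ^ 2 := by
    intro i x
    have h0 := (hpos x).ne'
    have : pd i ζ x = w x * pd i u x + u x * pd i w x := by
      rw [← pd_mul i (smooth_diff hws x) (smooth_diff hu x)]
      congr 1
      ext y
      simp only [hw]
      field_simp [(hpos y).ne']
    have hwx : w x * u x = ζ x := by simp only [hw]; field_simp
    rw [eq_div_iff (pow_ne_zero _ h0)]
    simp only [hG]
    rw [this, ← hwx]
    ring
  set F : Fin N → EE N → ℝ := fun i x => (χ x * χ x) * (w x * G i x) with hF
  have hFs : ∀ i, ContDiff ℝ (⊤ : ℕ∞) (F i) := fun i => (hχ.mul hχ).mul (hws.mul (hGs i))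
  have hFc : ∀ i, HasCompactSupport (F i) := fun i => (hc.mul_right (f' := χ)).mul_right
  have hdF : ∀ i x, pd i (F i) x = (χ x * χ x) * (w x * pd i (G i) x + G i x * (G i x / u x ^ 2))
      + (w x * G i x) * (2 * (χ x * pd i χ x)) := by
    intro i x
    have b1 := smooth_diff hχ x
    have b2 := smooth_diff hws x
    have b3 := smooth_diff (hGs i) x
    simp only [hF]
    rw [pd_mul i (b1.fun_mul b1) (b2.fun_mul b3), pd_mul i b1 b1, pd_mul i b2 b3, hdw]
    ring
  have hFI : ∀ i, Integrable (pd i (F i)) := fun i =>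
    (pd_smooth i (hFs i)).continuous.integrable_of_hasCompactSupport (pd_compact i (hFc i))
  have hdivI : Integrable (fun x => ∑ i, pd i (F i) x) := integrable_finsetSum _ fun i _ => hFI i
  have hdiv : ∫ x, ∑ i, pd i (F i) x = 0 := by
    rw [integral_finsetSum _ fun i _ => hFI i]
    exact Finset.sum_eq_zero fun i _ => integral_pd i (hFs i) (hFc i)
  have hgc : Continuous (fun x => gradsq χ x) := by
    unfold gradsq
    exact continuous_finsetSum _ fun i _ => ((pd_smooth i hχ).continuous.pow 2)
  have hgs : HasCompactSupport (fun x => gradsq χ x) := by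
    refine HasCompactSupport.intro hc (fun x hx => ?_)
    unfold gradsq
    refine Finset.sum_eq_zero fun i _ => ?_
    have : pd i χ x = 0 := by
      have := image_eq_zero_of_notMem_tsupport (f := pd i χ) (x := x)
        (fun h => hx (by unfold pd at h; exact tsupport_fderiv_apply_subset ℝ _ h))
      exact this
    rw [this]; norm_num
  have hRI : Integrable (fun x => 4 * (ζ x ^ 2 * gradsq χ x)) := by
    refine Integrable.const_mul ?_ 4
    exact ((hζ.continuous.pow 2).mul hgc).integrable_of_hasCompactSupport hgs.mul_left
  have key : ∀ x, χ x ^ 2 * ∑ i, (G i x / u x) ^ 2 ≤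
      4 * (ζ x ^ 2 * gradsq χ x) + 2 * ∑ i, pd i (F i) x := by
    intro x
    have h0 := (hpos x).ne'
    have e : ∑ i, pd i (F i) x = ∑ i, ((χ x * (G i x / u x)) ^ 2
        + 2 * (χ x * (G i x / u x)) * (ζ x * pd i χ x)) := by
      have : ∀ i, pd i (F i) x = ((χ x * (G i x / u x)) ^ 2
        + 2 * (χ x * (G i x / u x)) * (ζ x * pd i χ x)) + (χ x * χ x * w x) * pd i (G i) x := by
        intro i
        rw [hdF]
        simp only [hw]
        field_simp
        ring
      simp only [this]
      rw [Finset.sum_add_distrib, ← Finset.mul_sum, hdG, mul_zero, add_zero]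
    rw [e, gradsq, Finset.mul_sum, Finset.mul_sum, Finset.mul_sum, Finset.mul_sum,
      ← Finset.sum_add_distrib]
    refine Finset.sum_le_sum fun i _ => ?_
    nlinarith [sq_nonneg (χ x * (G i x / u x) + 2 * (ζ x * pd i χ x))]
  have hLI : Integrable (fun x => χ x ^ 2 * ∑ i, (G i x / u x) ^ 2) := by
    refine Continuous.integrable_of_hasCompactSupport ?_ ?_
    · refine (hχ.continuous.pow 2).mul (continuous_finsetSum _ fun i _ => ?_)
      exact ((hGs i).continuous.div hu.continuous (fun x => (hpos x).ne')).pow 2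
    · refine HasCompactSupport.mul_right ?_
      simp only [pow_two]
      exact hc.mul_right (f' := χ)
  calc ∫ x, χ x ^ 2 * ∑ i, (G i x / u x) ^ 2
      ≤ ∫ x, (4 * (ζ x ^ 2 * gradsq χ x) + 2 * ∑ i, pd i (F i) x) :=
        integral_mono hLI (hRI.add (hdivI.const_mul 2)) key
    _ = ∫ x, 4 * (ζ x ^ 2 * gradsq χ x) := by
        rw [integral_add hRI (hdivI.const_mul 2), integral_const_mul 2, hdiv]
        ring

/-- Cutoff functions. -/
lemma cutoff (N : ℕ) : ∃ C : ℝ, 0 ≤ C ∧ ∀ R : ℝ, 1 ≤ R → ∃ χ : EE N → ℝ,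
    ContDiff ℝ (⊤ : ℕ∞) χ ∧ HasCompactSupport χ ∧ (∀ x, ‖x‖ ≤ R → χ x = 1) ∧
    (∀ x, 2 * R ≤ ‖x‖ → χ x = 0) ∧ (∀ x, χ x ^ 2 ≤ 1) ∧ ∀ x, gradsq χ x ≤ C / R := by
  let b : ContDiffBump (0 : EE N) := ⟨1, 2, by norm_num, by norm_num⟩
  have hb : ContDiff ℝ (⊤ : ℕ∞) (b : EE N → ℝ) := b.contDiff
  have hbc : HasCompactSupport (b : EE N → ℝ) := b.hasCompactSupport
  have hbd : ∀ i : Fin N, ∃ C, ∀ x, ‖pd i b x‖ ≤ C := fun i =>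
    (pd_compact i hbc).exists_bound_of_continuous (pd_smooth i hb).continuous
  choose K hK using hbd
  refine ⟨∑ i, K i ^ 2, by positivity, fun R hR => ?_⟩
  have hR0 : 0 < R := by linarith
  refine ⟨fun x => b (R⁻¹ • x), hb.comp (contDiff_const_smul _), ?_, ?_, ?_, ?_, ?_⟩
  · exact hbc.comp_homeomorph (Homeomorph.smulOfNeZero R⁻¹ (by positivity))
  · intro x hx
    apply b.one_of_mem_closedBall
    rw [mem_closedBall_zero_iff, norm_smul, norm_inv, Real.norm_of_nonneg hR0.le]
    show R⁻¹ * ‖x‖ ≤ 1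
    rw [inv_mul_le_iff₀ hR0]; linarith
  · intro x hx
    apply b.zero_of_le_dist
    rw [dist_zero_right, norm_smul, norm_inv, Real.norm_of_nonneg hR0.le]
    show 2 ≤ R⁻¹ * ‖x‖
    rw [le_inv_mul_iff₀ hR0]; linarith
  · intro x
    have h1 : b (R⁻¹ • x) ≤ 1 := b.le_one
    have h2 : 0 ≤ b (R⁻¹ • x) := b.nonneg
    show b (R⁻¹ • x) ^ 2 ≤ 1
    nlinarith
  · intro x
    have hp : ∀ i, pd i (fun x => b (R⁻¹ • x)) x = R⁻¹ * pd i b (R⁻¹ • x) := by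
      intro i
      unfold pd
      rw [fderiv_comp_smul]
      simp
    unfold gradsq
    rw [Finset.sum_div]
    refine Finset.sum_le_sum fun i _ => ?_
    rw [hp, mul_pow]
    have h1 : pd i b (R⁻¹ • x) ^ 2 ≤ K i ^ 2 := by
      rw [sq_le_sq]
      exact (hK i _).trans (le_abs_self _)
    have h2 : R⁻¹ ≤ 1 := inv_le_one_of_one_le₀ hR
    have h3 : 0 < R⁻¹ := by positivity
    have h4 : R⁻¹ ^ 2 ≤ R⁻¹ := by nlinarith
    rw [div_eq_inv_mul]
    exact mul_le_mul h4 h1 (sq_nonneg _) h3.le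

lemma lin_zero {N : ℕ} (T : EE N →L[ℝ] ℝ)
    (h : ∀ i, T (EuclideanSpace.single i 1) = 0) : T = 0 := by
  have : (T : EE N →ₗ[ℝ] ℝ) = 0 := by
    refine (EuclideanSpace.basisFun (Fin N) ℝ).toBasis.ext fun i => ?_
    simpa using h i
  ext x
  exact congrArg (fun S : EE N →ₗ[ℝ] ℝ => S x) this

/-- The kernel of `L₋` is spanned by `u`. -/
theorem stmt2 (N : ℕ) (hN : 1 ≤ N) (ω p : ℝ) (hω : 0 < ω) (hp : 1 < p)
    (hpmax : 3 ≤ N → p < (3 * (N : ℝ) + 2) / ((N : ℝ) - 2))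
    (u : EuclideanSpace ℝ (Fin N) → ℝ) (hu : IsGroundState N ω p u)
    (ζ : EuclideanSpace ℝ (Fin N) → ℝ) (hζ : ContDiff ℝ (⊤ : ℕ∞) ζ)
    (hint : Integrable (fun x => (ζ x) ^ 2 + gradsq ζ x))
    (heq : ∀ x, Lminus ω p u ζ x = 0) :
    ∃ c : ℝ, ∀ x, ζ x = c * u x := by
  have hpos := hu.pos
  have hW : ∀ x, u x * lap ζ x - ζ x * lap u x = 0 := by
    intro x
    have h1 := hu.solves x
    have h2 := heq x
    unfold Lminus at h2
    have h3 : u x ^ p = u x ^ (p - 1) * u x := by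
      rw [← Real.rpow_add_one (hpos x).ne']; ring_nf
    rw [h3] at h1
    linear_combination ζ x * h1 - u x * h2
  have hζ2 : Integrable (fun x => ζ x ^ 2) := by
    refine hint.mono' (hζ.continuous.pow 2).aestronglyMeasurable (Eventually.of_forall fun x => ?_)
    have : 0 ≤ gradsq ζ x := Finset.sum_nonneg fun i _ => sq_nonneg _
    rw [Real.norm_of_nonneg (sq_nonneg _)]
    linarith
  set g : EE N → ℝ := fun x => ∑ i, ((u x * pd i ζ x - ζ x * pd i u x) / u x) ^ 2 with hg
  have hg0 : ∀ x, 0 ≤ g x := fun x => Finset.sum_nonneg fun i _ => sq_nonneg _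
  have hgc : Continuous g := by
    refine continuous_finsetSum _ fun i _ => ?_
    exact ((((hu.smooth.continuous.mul (pd_smooth i hζ).continuous).sub
      (hζ.continuous.mul (pd_smooth i hu.smooth).continuous))).div hu.smooth.continuous
      (fun x => (hpos x).ne')).pow 2
  obtain ⟨C, hC, hcut⟩ := cutoff N
  have hI : ∀ χ : EE N → ℝ, ContDiff ℝ (⊤ : ℕ∞) χ → HasCompactSupport χ →
      HasCompactSupport (fun x => χ x ^ 2 * g x) := by
    intro χ _ hc
    refine HasCompactSupport.mul_right ?_
    simp only [pow_two]
    exact hc.mul_right (f' := χ)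
  have hgz : ∀ x, g x = 0 := by
    intro x0
    by_contra hne
    obtain ⟨χ, hs, hc, h1, h0, hle, -⟩ := hcut (‖x0‖ + 1) (by linarith [norm_nonneg x0])
    have hcont : Continuous (fun x => χ x ^ 2 * g x) := (hs.continuous.pow 2).mul hgc
    have hposI : 0 < ∫ x, χ x ^ 2 * g x := by
      refine hcont.integral_pos_of_hasCompactSupport_nonneg_nonzero (x := x0) (hI χ hs hc)
        (fun x => mul_nonneg (sq_nonneg _) (hg0 x)) ?_
      show χ x0 ^ 2 * g x0 ≠ 0
      rw [h1 x0 (by linarith)]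
      simpa using hne
    have hbound : ∀ R : ℝ, 2 * (‖x0‖ + 1) ≤ R →
        ∫ x, χ x ^ 2 * g x ≤ 4 * C * (∫ x, ζ x ^ 2) / R := by
      intro R hR
      have hR1 : 1 ≤ R := by linarith [norm_nonneg x0]
      obtain ⟨ψ, ks, kc, k1, k0, kle, kg⟩ := hcut R hR1
      calc ∫ x, χ x ^ 2 * g x ≤ ∫ x, ψ x ^ 2 * g x := by
            refine integral_mono (hcont.integrable_of_hasCompactSupport (hI χ hs hc))
              (((ks.continuous.pow 2).mul hgc).integrable_of_hasCompactSupport (hI ψ ks kc))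
              (fun x => ?_)
            show χ x ^ 2 * g x ≤ ψ x ^ 2 * g x
            refine mul_le_mul_of_nonneg_right ?_ (hg0 x)
            rcases le_total ‖x‖ R with h | h
            · rw [k1 x h]; simpa using hle x
            · rw [h0 x (hR.trans h)]; simpa using sq_nonneg (ψ x)
        _ ≤ ∫ x, 4 * (ζ x ^ 2 * gradsq ψ x) := cacc hu.smooth hpos hζ ks kc hW
        _ ≤ ∫ x, (4 * C / R) * ζ x ^ 2 := by
            refine integral_mono_of_nonneg (Eventually.of_forall fun x => ?_)
              (hζ2.const_mul _) (Eventually.of_forall fun x => ?_)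
            · have : 0 ≤ gradsq ψ x := Finset.sum_nonneg fun i _ => sq_nonneg _
              show 0 ≤ 4 * (ζ x ^ 2 * gradsq ψ x)
              positivity
            · show 4 * (ζ x ^ 2 * gradsq ψ x) ≤ 4 * C / R * ζ x ^ 2
              have := mul_le_mul_of_nonneg_left (kg x) (sq_nonneg (ζ x))
              calc _ ≤ 4 * (ζ x ^ 2 * (C / R)) := by linarith
                _ = _ := by ring
        _ = _ := by rw [integral_const_mul]; ring
    have hlim : Tendsto (fun R : ℝ => 4 * C * (∫ x, ζ x ^ 2) / R) atTop (𝓝 0) :=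
      tendsto_const_nhds.div_atTop tendsto_id
    have := ge_of_tendsto hlim (eventually_atTop.2 ⟨_, hbound⟩)
    linarith
  have hGz : ∀ i x, u x * pd i ζ x - ζ x * pd i u x = 0 := by
    intro i x
    have := (Finset.sum_eq_zero_iff_of_nonneg (fun i _ => sq_nonneg _)).1 (hgz x) i
      (Finset.mem_univ i)
    have h := pow_eq_zero_iff (two_ne_zero) |>.1 this
    exact (div_eq_zero_iff.1 h).resolve_right (hpos x).ne'
  have hws : ContDiff ℝ (⊤ : ℕ∞) (fun x => ζ x / u x) :=
    hζ.div hu.smooth (fun x => (hpos x).ne')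
  have hdw : ∀ x, fderiv ℝ (fun x => ζ x / u x) x = 0 := by
    intro x
    refine lin_zero _ fun i => ?_
    have : pd i ζ x = ζ x / u x * pd i u x + u x * pd i (fun x => ζ x / u x) x := by
      rw [← pd_mul i (smooth_diff hws x) (smooth_diff hu.smooth x)]
      congr 1
      ext y
      field_simp [(hpos y).ne']
    have h2 := hGz i x
    rw [this] at h2
    have h0 := (hpos x).ne'
    have h3 : u x ^ 2 * pd i (fun x => ζ x / u x) x = 0 := by
      rw [← h2]; field_simp; ring
    exact (mul_eq_zero.1 h3).resolve_left (pow_ne_zero _ h0)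
  refine ⟨ζ 0 / u 0, fun x => ?_⟩
  have := is_const_of_fderiv_eq_zero (smooth_diff hws) hdw x 0
  rw [← this]
  field_simp [(hpos x).ne']

end
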